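/- Let H be a real symmetric positive semidefinite n×n matrix, ρ > 0, Z = H + ρI, let F be a real m×n matrix with full row rank m (m ≤ n), and let M11 denote the top-left n×n block of the inverse of the KKT matrix K = [[Z, Fᵀ], [F, 0]]. If ker H ∩ ker F = {0}, then the 2n×2n block matrix N = [[ρ·M11, −(M11 − (1/ρ)I)], [0, 0]] is Schur stable, i.e. its spectral radius is strictly less than one. -/

import Mathlib

/-!
Let `K` be the KKT matrix of `Z = H + ρ I` and `F`, let `u` be a vector and let `x = M₁₁ u`. The
first block column of `K K⁻¹ = I` says that `F x = 0` and that `Z x - u` lies in the range of `Fᴴ`,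
so `x⋆ Z x = x⋆ u`. Since `N` is block upper triangular, a nonzero eigenvalue `μ` of `N` is one of
`ρ M₁₁`; for a corresponding eigenvector `u` we have `ρ x = μ u`, whence
`μ (x⋆ H x + ρ x⋆ x) = ρ x⋆ x`. As `x` is a nonzero vector of `ker F`, the real part of `x⋆ H x` is
positive, hence `‖μ‖ < 1`. For positive semidefinite `H` this positivity on `ker F` amounts to
`ker H ∩ ker F = 0`, because `x⋆ H x = 0` forces `H x = 0`.
-/

section

open Matrix

variable {n m 𝕜 : Type*} [RCLike 𝕜]

/-- The KKT matrix of the quadratic program with Hessian `Z` and constraint matrix `F`. -/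
def kktMatrix (Z : Matrix n n 𝕜) (F : Matrix m n 𝕜) : Matrix (n ⊕ m) (n ⊕ m) 𝕜 :=
  fromBlocks Z Fᴴ F 0

theorem kktMatrix_map_ofReal (Z : Matrix n n ℝ) (F : Matrix m n ℝ) :
    (kktMatrix Z F).map Complex.ofReal =
      kktMatrix (Z.map Complex.ofReal) (F.map Complex.ofReal) := by
  rw [kktMatrix, kktMatrix, fromBlocks_map, Matrix.map_zero _ Complex.ofReal_zero,
    conjTranspose_map _ fun _ ↦ (Complex.conj_ofReal _).symm]

theorem linearIndependent_row_map_ofReal [Finite n] {A : Matrix m n ℝ}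
    (hA : LinearIndependent ℝ A.row) :
    LinearIndependent ℂ (A.map Complex.ofReal).row :=
  linearIndependent_algebraMap_comp_iff (S := ℂ) (v := A.row) |>.mpr hA

variable [Fintype n]

theorem linearIndependent_row_of_rank_eq_card [Fintype m] {K : Type*} [Field K] {A : Matrix m n K}
    (hA : A.rank = Fintype.card m) : LinearIndependent K A.row := by
  rw [linearIndependent_iff_card_eq_finrank_span, Set.finrank, ← rank_eq_finrank_span_row, hA]

theorem star_dotProduct_conjTranspose_mulVec_of_mulVec_eq_zero [Fintype m] {R : Type*}
    [NonUnitalSemiring R] [StarRing R] {A : Matrix m n R} {x : n → R} (hx : A *ᵥ x = 0)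
    (y : m → R) :
    star x ⬝ᵥ Aᴴ *ᵥ y = 0 := by
  rw [dotProduct_mulVec, vecMul_conjTranspose, star_star, hx, star_zero, zero_dotProduct]

theorem map_nonsing_inv {K L : Type*} [Field K] [Field L] [DecidableEq n] (f : K →+* L)
    (A : Matrix n n K) : A⁻¹.map f = (A.map f)⁻¹ := by
  rw [inv_def, inv_def, Ring.inverse_eq_inv', Ring.inverse_eq_inv', ← RingHom.mapMatrix_apply f A,
    ← RingHom.map_det, ← RingHom.map_adjugate, ← map_inv₀, RingHom.mapMatrix_apply,
    Matrix.map_smul' _ _ _ (map_mul f)]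

theorem spectrum_fromBlocks_zero₂₁ [Fintype m] {K : Type*} [Field K] [DecidableEq n] [DecidableEq m]
    (A : Matrix n n K) (B : Matrix n m K) (D : Matrix m m K) :
    spectrum K (fromBlocks A B 0 D) = spectrum K A ∪ spectrum K D := by
  ext μ
  simp only [Set.mem_union, mem_spectrum_iff_isRoot_charpoly, charpoly_fromBlocks_zero₂₁,
    Polynomial.root_mul]

theorem exists_mulVec_eq_smul_of_mem_spectrum {K : Type*} [Field K] [DecidableEq n]
    {A : Matrix n n K} {μ : K} (hμ : μ ∈ spectrum K A) : ∃ u ≠ 0, A *ᵥ u = μ • u := by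
  rw [← spectrum_toLin', ← Module.End.hasEigenvalue_iff_mem_spectrum] at hμ
  obtain ⟨u, hu⟩ := hμ.exists_hasEigenvector
  exact ⟨u, hu.2, by simpa only [toLin'_apply] using hu.apply_eq_smul⟩

theorem norm_lt_one_of_mul_add_eq {μ h : 𝕜} {s : ℝ} (hs : 0 < s) (hh : 0 < RCLike.re h)
    (hμ : μ * (h + s) = s) : ‖μ‖ < 1 := by
  have hlt : s < ‖h + s‖ := calc
    s < RCLike.re (h + s) := by simpa using hh
    _ ≤ ‖h + s‖ := RCLike.re_le_norm _
  have hnorm : ‖μ‖ * ‖h + s‖ = s := by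
    rw [← norm_mul, hμ, RCLike.norm_ofReal, abs_of_pos hs]
  by_contra! hle
  exact hlt.not_ge <| (le_mul_of_one_le_left (norm_nonneg _) hle).trans_eq hnorm

/-- The quadratic form of `H` has positive real part on the nonzero vectors of `ker F` (positivity
of the reduced Hessian in constrained optimization). `H` is not required to be Hermitian. -/
def PosDefOnKer (H : Matrix n n 𝕜) (F : Matrix m n 𝕜) : Prop :=
  ∀ x, x ≠ 0 → F *ᵥ x = 0 → 0 < RCLike.re (star x ⬝ᵥ H *ᵥ x)

open ComplexOrder in
theorem posDefOnKer_of_posSemidef {H : Matrix n n 𝕜} {F : Matrix m n 𝕜} (hH : H.PosSemidef)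
    (hker : LinearMap.ker H.mulVecLin ⊓ LinearMap.ker F.mulVecLin = ⊥) : PosDefOnKer H F := by
  intro x hx hFx
  have hHx : H *ᵥ x ≠ 0 := fun hHx ↦ hx <| (Submodule.eq_bot_iff _).mp hker x ⟨hHx, hFx⟩
  have hpos : 0 < star x ⬝ᵥ H *ᵥ x := (hH.dotProduct_mulVec_nonneg x).lt_of_ne' <|
    (hH.dotProduct_mulVec_zero_iff x).not.mpr hHx
  exact (RCLike.pos_iff.mp hpos).1

open ComplexOrder in
theorem PosDefOnKer.add_smul_one [DecidableEq n] {H : Matrix n n 𝕜} {F : Matrix m n 𝕜}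
    (h : PosDefOnKer H F) {ρ : ℝ} (hρ : 0 ≤ ρ) : PosDefOnKer (H + ρ • 1) F := by
  intro x hx hFx
  have hxx : 0 ≤ RCLike.re (star x ⬝ᵥ x) :=
    (RCLike.nonneg_iff.mp (dotProduct_star_self_nonneg x)).1
  rw [add_mulVec, smul_mulVec, one_mulVec, dotProduct_add, dotProduct_smul, map_add, RCLike.smul_re]
  exact add_pos_of_pos_of_nonneg (h x hx hFx) (mul_nonneg hρ hxx)

theorem re_map_ofReal_mulVec (A : Matrix m n ℝ) (x : n → ℂ) (i : m) :
    ((A.map Complex.ofReal *ᵥ x) i).re = (A *ᵥ fun j ↦ (x j).re) i := by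
  simp [mulVec, dotProduct]

theorem im_map_ofReal_mulVec (A : Matrix m n ℝ) (x : n → ℂ) (i : m) :
    ((A.map Complex.ofReal *ᵥ x) i).im = (A *ᵥ fun j ↦ (x j).im) i := by
  simp [mulVec, dotProduct]

theorem re_star_dotProduct_map_ofReal_mulVec (A : Matrix n n ℝ) (x : n → ℂ) :
    (star x ⬝ᵥ A.map Complex.ofReal *ᵥ x).re =
      (fun i ↦ (x i).re) ⬝ᵥ A *ᵥ (fun i ↦ (x i).re) +
        (fun i ↦ (x i).im) ⬝ᵥ A *ᵥ (fun i ↦ (x i).im) := by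
  simp [dotProduct, re_map_ofReal_mulVec, im_map_ofReal_mulVec, Finset.sum_add_distrib]

theorem PosDefOnKer.map_ofReal {H : Matrix n n ℝ} {F : Matrix m n ℝ} (h : PosDefOnKer H F) :
    PosDefOnKer (H.map Complex.ofReal) (F.map Complex.ofReal) := by
  intro x hx hFx
  set a : n → ℝ := fun i ↦ (x i).re
  set b : n → ℝ := fun i ↦ (x i).im
  have hFa : F *ᵥ a = 0 := funext fun i ↦ by
    rw [← re_map_ofReal_mulVec, hFx, Pi.zero_apply, Pi.zero_apply, Complex.zero_re]
  have hFb : F *ᵥ b = 0 := funext fun i ↦ by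
    rw [← im_map_ofReal_mulVec, hFx, Pi.zero_apply, Pi.zero_apply, Complex.zero_im]
  have hnonneg (y : n → ℝ) (hFy : F *ᵥ y = 0) : 0 ≤ y ⬝ᵥ H *ᵥ y := by
    rcases eq_or_ne y 0 with rfl | hy
    · rw [zero_dotProduct]
    · exact (h y hy hFy).le
  have hab : a ≠ 0 ∨ b ≠ 0 := by
    contrapose! hx
    exact funext fun i ↦ Complex.ext (congrFun hx.1 i) (congrFun hx.2 i)
  change 0 < (star x ⬝ᵥ H.map Complex.ofReal *ᵥ x).re
  rw [re_star_dotProduct_map_ofReal_mulVec]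
  rcases hab with ha0 | hb0
  · exact add_pos_of_pos_of_nonneg (h a ha0 hFa) (hnonneg b hFb)
  · exact add_pos_of_nonneg_of_pos (hnonneg a hFa) (h b hb0 hFb)

variable [Fintype m] [DecidableEq n] [DecidableEq m]

theorem isUnit_kktMatrix {Z : Matrix n n 𝕜} {F : Matrix m n 𝕜} (hZ : PosDefOnKer Z F)
    (hF : LinearIndependent 𝕜 F.row) : IsUnit (kktMatrix Z F) := by
  rw [← mulVec_injective_iff_isUnit, ← coe_mulVecLin, injective_iff_map_eq_zero]
  intro w hw
  obtain ⟨x, y, rfl⟩ : ∃ x y, w = Sum.elim x y := ⟨_, _, (Sum.elim_comp_inl_inr w).symm⟩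
  rw [mulVecLin_apply, kktMatrix, fromBlocks_mulVec, Sum.elim_comp_inl, Sum.elim_comp_inr,
    zero_mulVec, add_zero, ← Sum.elim_zero_zero, Sum.elim_eq_iff] at hw
  obtain ⟨hZx, hFx⟩ := hw
  have hxZx : star x ⬝ᵥ Z *ᵥ x = 0 := by
    simpa only [dotProduct_add, star_dotProduct_conjTranspose_mulVec_of_mulVec_eq_zero hFx,
      add_zero, dotProduct_zero] using congrArg (star x ⬝ᵥ ·) hZx
  obtain rfl : x = 0 := by
    by_contra hx
    exact (hZ x hx hFx).ne' (by rw [hxZx, map_zero])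
  have hy : star y ᵥ* F = 0 := by
    rw [mulVec_zero, zero_add, mulVec_conjTranspose, star_eq_zero] at hZx
    exact hZx
  have hy0 : star y = 0 := vecMul_injective_iff.mpr hF (hy.trans (zero_vecMul F).symm)
  rw [star_eq_zero.mp hy0, Sum.elim_zero_zero]

/-- The block `M₁₁` of the inverse KKT matrix, mapping `u` to the solution `x` of
`Z x + Fᴴ y = u`, `F x = 0`. It is meaningful only when the KKT matrix is invertible, the inverse
being `0` otherwise. -/
noncomputable def kktInv₁₁ (Z : Matrix n n 𝕜) (F : Matrix m n 𝕜) : Matrix n n 𝕜 :=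
  (kktMatrix Z F)⁻¹.toBlocks₁₁

theorem kktMatrix_mul_inv_blocks {Z : Matrix n n 𝕜} {F : Matrix m n 𝕜}
    (hK : IsUnit (kktMatrix Z F)) :
    Z * kktInv₁₁ Z F + Fᴴ * (kktMatrix Z F)⁻¹.toBlocks₂₁ = 1 ∧ F * kktInv₁₁ Z F = 0 := by
  have hinv := mul_nonsing_inv _ ((isUnit_iff_isUnit_det _).mp hK)
  rw [← fromBlocks_toBlocks (kktMatrix Z F)⁻¹] at hinv
  nth_rw 1 [kktMatrix] at hinv
  rw [fromBlocks_multiply, ← fromBlocks_one, fromBlocks_inj, Matrix.zero_mul, add_zero] at hinv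
  exact ⟨hinv.1, hinv.2.2.1⟩

theorem mulVec_kktInv₁₁_mulVec {Z : Matrix n n 𝕜} {F : Matrix m n 𝕜}
    (hK : IsUnit (kktMatrix Z F)) (u : n → 𝕜) : F *ᵥ (kktInv₁₁ Z F *ᵥ u) = 0 := by
  rw [mulVec_mulVec, (kktMatrix_mul_inv_blocks hK).2, zero_mulVec]

theorem star_dotProduct_mulVec_kktInv₁₁_mulVec {Z : Matrix n n 𝕜} {F : Matrix m n 𝕜}
    (hK : IsUnit (kktMatrix Z F)) (u : n → 𝕜) :
    star (kktInv₁₁ Z F *ᵥ u) ⬝ᵥ Z *ᵥ (kktInv₁₁ Z F *ᵥ u) = star (kktInv₁₁ Z F *ᵥ u) ⬝ᵥ u := by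
  set x := kktInv₁₁ Z F *ᵥ u with hx
  set y := (kktMatrix Z F)⁻¹.toBlocks₂₁ *ᵥ u with hy
  have hu : Z *ᵥ x + Fᴴ *ᵥ y = u := by
    rw [hx, hy, mulVec_mulVec, mulVec_mulVec, ← add_mulVec, (kktMatrix_mul_inv_blocks hK).1,
      one_mulVec]
  calc star x ⬝ᵥ Z *ᵥ x = star x ⬝ᵥ Z *ᵥ x + star x ⬝ᵥ Fᴴ *ᵥ y := by
        rw [star_dotProduct_conjTranspose_mulVec_of_mulVec_eq_zero (mulVec_kktInv₁₁_mulVec hK u),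
          add_zero]
    _ = star x ⬝ᵥ u := by rw [← dotProduct_add, hu]

open ComplexOrder in
theorem norm_lt_one_of_mem_spectrum_smul_kktInv₁₁ {H : Matrix n n 𝕜} {F : Matrix m n 𝕜} {ρ : ℝ}
    (hρ : 0 < ρ) (hpos : PosDefOnKer H F) (hF : LinearIndependent 𝕜 F.row) {μ : 𝕜}
    (hμ : μ ∈ spectrum 𝕜 (ρ • kktInv₁₁ (H + ρ • 1) F)) : ‖μ‖ < 1 := by
  rcases eq_or_ne μ 0 with rfl | hμ0
  · simp
  obtain ⟨u, hu, hMu⟩ := exists_mulVec_eq_smul_of_mem_spectrum hμ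
  have hK := isUnit_kktMatrix (hpos.add_smul_one hρ.le) hF
  have hFx := mulVec_kktInv₁₁_mulVec hK u
  have hxZx := star_dotProduct_mulVec_kktInv₁₁_mulVec hK u
  rw [smul_mulVec] at hMu
  set x := kktInv₁₁ (H + ρ • 1) F *ᵥ u
  have hx : x ≠ 0 := by
    intro hx
    rw [hx, smul_zero] at hMu
    exact smul_ne_zero hμ0 hu hMu.symm
  obtain ⟨s, hs, hsx⟩ : ∃ s > (0 : ℝ), (s : 𝕜) = star x ⬝ᵥ x :=
    RCLike.pos_iff_exists_ofReal.mp (dotProduct_star_self_pos_iff.mpr hx)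
  refine norm_lt_one_of_mul_add_eq (mul_pos hρ hs) (hpos x hx hFx) ?_
  rw [RCLike.ofReal_mul, hsx, ← RCLike.real_smul_eq_coe_mul]
  calc μ * (star x ⬝ᵥ H *ᵥ x + ρ • (star x ⬝ᵥ x)) = μ * (star x ⬝ᵥ (H + ρ • 1) *ᵥ x) := by
        rw [add_mulVec, smul_mulVec, one_mulVec, dotProduct_add, dotProduct_smul]
    _ = star x ⬝ᵥ (μ • u) := by rw [hxZx, dotProduct_smul, smul_eq_mul]
    _ = ρ • (star x ⬝ᵥ x) := by rw [← hMu, dotProduct_smul]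

/-- The matrix `N` governing the ADMM error recursion, with penalty parameter `ρ`, for the
quadratic program with Hessian `H` and constraint matrix `F`. -/
noncomputable def admmErrorMatrix (ρ : ℝ) (H : Matrix n n 𝕜) (F : Matrix m n 𝕜) :
    Matrix (n ⊕ n) (n ⊕ n) 𝕜 :=
  fromBlocks (ρ • kktInv₁₁ (H + ρ • 1) F) (-(kktInv₁₁ (H + ρ • 1) F - ρ⁻¹ • 1)) 0 0

theorem admm_error_matrix_schur_stable_general {H : Matrix n n 𝕜} {F : Matrix m n 𝕜} {ρ : ℝ}
    (hρ : 0 < ρ) (hpos : PosDefOnKer H F) (hF : LinearIndependent 𝕜 F.row) :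
    ∀ μ ∈ spectrum 𝕜 (admmErrorMatrix ρ H F), ‖μ‖ < 1 := by
  intro μ hμ
  rw [admmErrorMatrix, spectrum_fromBlocks_zero₂₁] at hμ
  rcases hμ with hμ | hμ
  · exact norm_lt_one_of_mem_spectrum_smul_kktInv₁₁ hρ hpos hF hμ
  · obtain ⟨u, hu, h0⟩ := exists_mulVec_eq_smul_of_mem_spectrum hμ
    rw [zero_mulVec, eq_comm, smul_eq_zero_iff_left hu] at h0
    simp [h0]

theorem kktInv₁₁_map_ofReal (Z : Matrix n n ℝ) (F : Matrix m n ℝ) :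
    (kktInv₁₁ Z F).map Complex.ofReal =
      kktInv₁₁ (Z.map Complex.ofReal) (F.map Complex.ofReal) := by
  rw [kktInv₁₁, kktInv₁₁, ← kktMatrix_map_ofReal]
  exact congrArg toBlocks₁₁ (map_nonsing_inv Complex.ofRealHom (kktMatrix Z F))

theorem admmErrorMatrix_map_ofReal (ρ : ℝ) (H : Matrix n n ℝ) (F : Matrix m n ℝ) :
    (admmErrorMatrix ρ H F).map Complex.ofReal =
      admmErrorMatrix ρ (H.map Complex.ofReal) (F.map Complex.ofReal) := by
  have hsmul (c : ℝ) (A : Matrix n n ℝ) :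
      (c • A).map Complex.ofReal = c • A.map Complex.ofReal :=
    Matrix.map_smul _ c (fun a ↦ by simp) A
  have hone : (1 : Matrix n n ℝ).map Complex.ofReal = 1 :=
    Matrix.map_one _ Complex.ofReal_zero Complex.ofReal_one
  have hZ : (H + ρ • 1).map Complex.ofReal = H.map Complex.ofReal + ρ • 1 := by
    rw [Matrix.map_add _ Complex.ofReal_add, hsmul, hone]
  rw [admmErrorMatrix, admmErrorMatrix, fromBlocks_map, Matrix.map_zero _ Complex.ofReal_zero,
    Matrix.map_neg _ Complex.ofReal_neg, Matrix.map_sub _ Complex.ofReal_sub, hsmul, hsmul, hone,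
    kktInv₁₁_map_ofReal, hZ]

end

/-- With `Z = H + ρI`, `F` of full row rank, `M11` the top-left block of
the inverse of the KKT matrix `[[Z, Fᵀ], [F, 0]]`, and `ker H ∩ ker F = {0}`, the block
matrix `N = [[ρ·M11, −(M11 − (1/ρ)I)], [0, 0]]` is Schur stable: every complex eigenvalue
of `N` has modulus strictly less than one. -/
theorem admm_error_matrix_schur_stable {n m : ℕ} (H : Matrix (Fin n) (Fin n) ℝ)
    (hH : H.PosSemidef) (ρ : ℝ) (hρ : 0 < ρ)
    (F : Matrix (Fin m) (Fin n) ℝ) (hmn : m ≤ n) (hF : F.rank = m)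
    (hker : LinearMap.ker H.mulVecLin ⊓ LinearMap.ker F.mulVecLin = ⊥)
    (Z : Matrix (Fin n) (Fin n) ℝ)
    (hZdef : Z = H + ρ • (1 : Matrix (Fin n) (Fin n) ℝ))
    (M11 : Matrix (Fin n) (Fin n) ℝ)
    (hM11 : M11 = ((Matrix.fromBlocks Z F.transpose F
      (0 : Matrix (Fin m) (Fin m) ℝ))⁻¹).toBlocks₁₁) :
    ∀ μ ∈ spectrum ℂ
      ((Matrix.fromBlocks (ρ • M11)
          (-(M11 - ρ⁻¹ • (1 : Matrix (Fin n) (Fin n) ℝ)))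
          (0 : Matrix (Fin n) (Fin n) ℝ)
          (0 : Matrix (Fin n) (Fin n) ℝ)).map Complex.ofReal),
      ‖μ‖ < 1 := by
  subst hZdef hM11
  have hstable := admm_error_matrix_schur_stable_general hρ
    (posDefOnKer_of_posSemidef hH hker).map_ofReal
    (linearIndependent_row_map_ofReal (linearIndependent_row_of_rank_eq_card (by simpa using hF)))
  rwa [← admmErrorMatrix_map_ofReal, admmErrorMatrix, kktInv₁₁, kktMatrix,
    Matrix.conjTranspose_eq_transpose_of_trivial] at hstable
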